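/- (i) Let 1 ≤ p_0 ≤ p_1 ≤ q_1 ≤ q_0 ≤ ∞ and 1 ≤ r ≤ ∞. Then for every N ∈ ℕ there is a constant C_N such that for all j ≥ 0, ‖𝒜_j‖_{L^{p_1}→L^{q_1}(L^r)} ≲ ‖𝒜_j‖_{L^{p_0}→L^{q_0}(L^r)} + C_N 2^{−jN}, with implicit constant independent of j. (ii) If r_0 ≤ r_1 and 1 ≤ p ≤ q ≤ ∞, then ‖𝒜_j‖_{L^p→L^q(L^{r_0})} ≲ ‖𝒜_j‖_{L^p→L^q(L^{r_1})} uniformly in j. -/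

import Mathlib

open MeasureTheory Metric Set
open scoped ENNReal NNReal FourierTransform

noncomputable section

/-- Euclidean `d`-space. -/
abbrev Euc (d : ℕ) : Type := EuclideanSpace ℝ (Fin d)

/-- The normalized surface measure `σ` on the unit sphere `S^{d-1} ⊆ ℝ^d`. -/
def sphereMeasure (d : ℕ) : Measure (Euc d) :=
  (((volume : Measure (Euc d)).toSphere Set.univ)⁻¹ : ℝ≥0∞) •
    ((volume : Measure (Euc d)).toSphere.map Subtype.val)

/-- The spherical average `A_t f(x) = ∫_{S^{d-1}} f(x - t y) dσ(y)`. -/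
def sphAvg {d : ℕ} (f : Euc d → ℂ) (t : ℝ) (x : Euc d) : ℂ :=
  ∫ y, f (x - t • y) ∂(sphereMeasure d)

/-- The dyadic symbols `β_j` built from the bump `β₀`:
`β_j(s) = β₀(2^{-j} s) - β₀(2^{1-j} s)` for `j ≥ 1`. -/
def betaJ (β₀ : ℝ → ℝ) : ℕ → ℝ → ℝ
  | 0 => β₀
  | (j + 1) => fun s => β₀ ((2 : ℝ) ^ (-(j + 1 : ℤ)) * s) - β₀ ((2 : ℝ) ^ (-(j : ℤ)) * s)

/-- The frequency localization `L_j` with symbol `β_j(|ξ|)`. -/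
def freqLoc (d : ℕ) (β₀ : ℝ → ℝ) (j : ℕ) (f : Euc d → ℂ) : Euc d → ℂ :=
  𝓕⁻ (fun ξ => (betaJ β₀ j ‖ξ‖ : ℂ) * 𝓕 f ξ)

/-- `χ` is an admissible time cutoff: smooth, `χ = 1` on a neighborhood of `[1,2]`,
supported in `[1/2,4]`. -/
def IsCutoff (χ : ℝ → ℝ) : Prop :=
  ContDiff ℝ (⊤ : ℕ∞) χ ∧ (∃ U : Set ℝ, IsOpen U ∧ Set.Icc 1 2 ⊆ U ∧ Set.EqOn χ 1 U) ∧
    Function.support χ ⊆ Set.Icc (1 / 2 : ℝ) 4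

/-- `β₀` is an admissible frequency bump: smooth, `β₀(s) = 1` for `|s| < 1/2` and
`β₀(s) = 0` for `|s| > 1`. -/
def IsBump (β₀ : ℝ → ℝ) : Prop :=
  ContDiff ℝ (⊤ : ℕ∞) β₀ ∧ (∀ s : ℝ, |s| < 1 / 2 → β₀ s = 1) ∧ ∀ s : ℝ, 1 < |s| → β₀ s = 0

/-- The frequency-localized operator `𝒜_j f(x,t) = χ(t) A_t L_j f(x)`. -/
def Aj (d : ℕ) (χ β₀ : ℝ → ℝ) (j : ℕ) (f : Euc d → ℂ) (x : Euc d) (t : ℝ) : ℂ :=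
  (χ t : ℂ) * sphAvg (freqLoc d β₀ j f) t x

/-- `L^q` norm (with respect to `μ`) of an `ℝ≥0∞`-valued function, `1 ≤ q ≤ ∞`. -/
def lqNorm {α : Type*} [MeasurableSpace α] (q : ℝ≥0∞) (g : α → ℝ≥0∞)
    (μ : Measure α) : ℝ≥0∞ :=
  if q = ∞ then essSup g μ else (∫⁻ x, g x ^ q.toReal ∂μ) ^ (1 / q.toReal)

/-- The mixed norm `‖F‖_{L^q(L^r)}` of `F : ℝ^d × ℝ → ℂ`. -/
def mixedNorm (d : ℕ) (q r : ℝ≥0∞) (F : Euc d → ℝ → ℂ) : ℝ≥0∞ :=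
  lqNorm q (fun x => lqNorm r (fun t => (‖F x t‖₊ : ℝ≥0∞)) volume) volume

/-- The operator norm `‖𝒜_j‖_{L^p → L^q(L^r)}`. -/
def AjOpNorm (d : ℕ) (χ β₀ : ℝ → ℝ) (j : ℕ) (p q r : ℝ≥0∞) : ℝ≥0∞ :=
  ⨆ (f : Euc d → ℂ) (_ : eLpNorm f p volume ≤ 1), mixedNorm d q r (Aj d χ β₀ j f)

/-! Part 1 -/

lemma bump_smooth (d : ℕ) (β₀ : ℝ → ℝ) (hβ : IsBump β₀) :
    ContDiff ℝ (⊤ : ℕ∞) (fun ξ : Euc d => (β₀ ‖ξ‖ : ℂ)) := by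
  rw [contDiff_iff_contDiffAt]
  intro ξ
  by_cases h : ξ = 0
  · have : (fun ξ : Euc d => (β₀ ‖ξ‖ : ℂ)) =ᶠ[nhds ξ] fun _ => 1 := by
      subst h
      filter_upwards [Metric.ball_mem_nhds (0 : Euc d) (by norm_num : (0:ℝ) < 1/2)] with x hx
      rw [hβ.2.1 ‖x‖ (by simpa using hx)]; simp
    exact contDiffAt_const.congr_of_eventuallyEq this
  · have h1 : ContDiffAt ℝ (⊤ : ℕ∞) (fun ξ : Euc d => ‖ξ‖) ξ := contDiffAt_norm ℝ h
    have h2 : ContDiffAt ℝ (⊤ : ℕ∞) (fun ξ : Euc d => β₀ ‖ξ‖) ξ := hβ.1.contDiffAt.comp ξ h1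
    exact (Complex.ofRealCLM.contDiff.contDiffAt).comp ξ h2

lemma bump_supp (d : ℕ) (β₀ : ℝ → ℝ) (hβ : IsBump β₀) :
    HasCompactSupport (fun ξ : Euc d => (β₀ ‖ξ‖ : ℂ)) := by
  refine HasCompactSupport.intro (isCompact_closedBall (0 : Euc d) 1) ?_
  intro x hx
  have : 1 < ‖x‖ := by simpa using hx
  rw [hβ.2.2 ‖x‖ (by simpa using this)]; simp

/-- base kernel -/
def P0 (d : ℕ) (β₀ : ℝ → ℝ) : Euc d → ℂ := 𝓕⁻ (fun ξ : Euc d => (β₀ ‖ξ‖ : ℂ))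

lemma P0_decay (d : ℕ) (β₀ : ℝ → ℝ) (hβ : IsBump β₀) (k : ℕ) :
    ∃ C : ℝ, 0 ≤ C ∧ ∀ v, ‖v‖ ^ k * ‖P0 d β₀ v‖ ≤ C := by
  let φ : SchwartzMap (Euc d) ℂ := (bump_supp d β₀ hβ).toSchwartzMap (bump_smooth d β₀ hβ)
  let ψ : SchwartzMap (Euc d) ℂ := 𝓕⁻ φ
  have h : (⇑ψ : Euc d → ℂ) = P0 d β₀ := SchwartzMap.fourierInv_coe φ
  obtain ⟨C, hC⟩ := ψ.decay k 0
  refine ⟨C, hC.1.le, fun v => ?_⟩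
  have := hC.2 v
  rwa [norm_iteratedFDeriv_zero, h] at this

lemma scaled_kernel (d : ℕ) (β₀ : ℝ → ℝ) (j : ℕ) (v : Euc d) :
    𝓕⁻ (fun ξ : Euc d => (β₀ ((2:ℝ) ^ (-(j:ℤ)) * ‖ξ‖) : ℂ)) v
      = ((2:ℝ) ^ j) ^ d • P0 d β₀ ((2:ℝ) ^ j • v) := by
  unfold P0
  rw [Real.fourierInv_eq, Real.fourierInv_eq]
  have := Measure.integral_comp_smul (volume : Measure (Euc d))
    (fun ξ : Euc d => Real.fourierChar (inner ℝ ξ ((2:ℝ)^j • v)) • (β₀ ‖ξ‖ : ℂ)) ((2:ℝ) ^ (-(j:ℤ)))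
  simp only [norm_smul, finrank_euclideanSpace, Fintype.card_fin] at this
  have h2 : |(((2:ℝ) ^ (-(j:ℤ))) ^ d)⁻¹| = ((2:ℝ)^j)^d := by
    rw [abs_of_nonneg (by positivity)]; simp
  rw [h2] at this
  rw [← this]
  congr 1; ext ξ
  have h3 : ‖(2:ℝ) ^ (-(j:ℤ))‖ = (2:ℝ) ^ (-(j:ℤ)) := Real.norm_of_nonneg (by positivity)
  rw [h3, inner_smul_left, inner_smul_right, ← mul_assoc]
  simp

lemma scaled_smooth (d : ℕ) (β₀ : ℝ → ℝ) (hβ : IsBump β₀) (j : ℕ) :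
    Continuous (fun ξ : Euc d => (β₀ ((2:ℝ) ^ (-(j:ℤ)) * ‖ξ‖) : ℂ)) := by
  have := hβ.1.continuous
  fun_prop

lemma scaled_int (d : ℕ) (β₀ : ℝ → ℝ) (hβ : IsBump β₀) (j : ℕ) :
    Integrable (fun ξ : Euc d => (β₀ ((2:ℝ) ^ (-(j:ℤ)) * ‖ξ‖) : ℂ)) := by
  refine (scaled_smooth d β₀ hβ j).integrable_of_hasCompactSupport ?_
  refine HasCompactSupport.intro (isCompact_closedBall (0 : Euc d) (2^j)) ?_
  intro x hx
  have : (2:ℝ)^j < ‖x‖ := by simpa using hx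
  have h1 : 1 < (2:ℝ) ^ (-(j:ℤ)) * ‖x‖ := by
    rw [zpow_neg, zpow_natCast, inv_mul_eq_div, lt_div_iff₀ (by positivity)]; linarith
  rw [hβ.2.2 _ (h1.trans_le (le_abs_self _))]; simp

/-- the kernel -/
def KJ (d : ℕ) (β₀ : ℝ → ℝ) (j : ℕ) : Euc d → ℂ := 𝓕⁻ (fun ξ : Euc d => (betaJ β₀ j ‖ξ‖ : ℂ))

lemma betaJ_cases (d : ℕ) (β₀ : ℝ → ℝ) (j : ℕ) :
    (fun ξ : Euc d => (betaJ β₀ (j+1) ‖ξ‖ : ℂ)) =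
     (fun ξ : Euc d => (β₀ ((2:ℝ) ^ (-((j+1 : ℕ):ℤ)) * ‖ξ‖) : ℂ))
      - (fun ξ : Euc d => (β₀ ((2:ℝ) ^ (-(j:ℤ)) * ‖ξ‖) : ℂ)) := by
  ext ξ; simp [betaJ]

lemma betaJ_zero (d : ℕ) (β₀ : ℝ → ℝ) :
    (fun ξ : Euc d => (betaJ β₀ 0 ‖ξ‖ : ℂ)) =
     (fun ξ : Euc d => (β₀ ((2:ℝ) ^ (-((0 : ℕ):ℤ)) * ‖ξ‖) : ℂ)) := by
  ext ξ; simp [betaJ]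

lemma betaJ_int (d : ℕ) (β₀ : ℝ → ℝ) (hβ : IsBump β₀) (j : ℕ) :
    Integrable (fun ξ : Euc d => (betaJ β₀ j ‖ξ‖ : ℂ)) := by
  cases j with
  | zero => rw [betaJ_zero]; exact scaled_int d β₀ hβ 0
  | succ j => rw [betaJ_cases]; exact (scaled_int d β₀ hβ _).sub (scaled_int d β₀ hβ _)

lemma betaJ_cont (d : ℕ) (β₀ : ℝ → ℝ) (hβ : IsBump β₀) (j : ℕ) :
    Continuous (fun ξ : Euc d => (betaJ β₀ j ‖ξ‖ : ℂ)) := by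
  cases j with
  | zero => rw [betaJ_zero]; exact scaled_smooth d β₀ hβ 0
  | succ j => rw [betaJ_cases]; exact (scaled_smooth d β₀ hβ _).sub (scaled_smooth d β₀ hβ _)

lemma scaled_bound (d : ℕ) (β₀ : ℝ → ℝ) (hβ : IsBump β₀) (N : ℕ) :
    ∃ C : ℝ, 0 ≤ C ∧ ∀ (j : ℕ) (v : Euc d), 4 ≤ ‖v‖ →
      ‖((2:ℝ) ^ j) ^ d • P0 d β₀ ((2:ℝ) ^ j • v)‖ ≤ C * ((2:ℝ) ^ (j * N))⁻¹ * (‖v‖ ^ (d+1))⁻¹ := by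
  obtain ⟨C, hC0, hC⟩ := P0_decay d β₀ hβ (N + d + (d+1))
  refine ⟨C, hC0, fun j v hv => ?_⟩
  have h := hC ((2:ℝ)^j • v)
  have hvp : 0 < ‖v‖ := by linarith
  rw [norm_smul] at h ⊢
  rw [norm_pow, norm_pow, Real.norm_ofNat] at *
  have ha : (1:ℝ) ≤ 2^j := one_le_pow₀ (by norm_num)
  rw [pow_mul]
  set a := (2:ℝ)^j
  set b := ‖P0 d β₀ (a • v)‖
  have hb : 0 ≤ b := norm_nonneg _
  rw [mul_assoc, ← mul_inv, ← div_eq_mul_inv, le_div_iff₀ (by positivity)]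
  refine le_trans ?_ h
  have : a ^ d * b * (a ^ N * ‖v‖ ^ (d + 1)) = (a^(N+d) * ‖v‖^(d+1) * b) * 1 := by ring
  rw [this]
  have : (a * ‖v‖) ^ (N + d + (d + 1)) * b = (a^(N+d) * ‖v‖^(d+1) * b) * (a^(d+1) * ‖v‖^(N+d)) := by ring
  rw [this]
  gcongr
  exact one_le_mul_of_one_le_of_one_le (one_le_pow₀ ha) (one_le_pow₀ (by linarith))

lemma fourierInv_sub' {d : ℕ} {f g : Euc d → ℂ} (hf : Integrable f) (hg : Integrable g) (v : Euc d) :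
    𝓕⁻ (f - g) v = 𝓕⁻ f v - 𝓕⁻ g v := by
  rw [Real.fourierInv_eq_fourier_neg, Real.fourierInv_eq_fourier_neg,
    Real.fourierInv_eq_fourier_neg, Real.fourier_eq, Real.fourier_eq, Real.fourier_eq, ← integral_sub]
  · simp [smul_sub]
  · exact (Real.fourierIntegral_convergent_iff _).2 hf
  · exact (Real.fourierIntegral_convergent_iff _).2 hg

lemma KJ_bound (d : ℕ) (β₀ : ℝ → ℝ) (hβ : IsBump β₀) (N : ℕ) :
    ∃ C : ℝ, 0 ≤ C ∧ ∀ (j : ℕ) (v : Euc d), 4 ≤ ‖v‖ →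
      ‖KJ d β₀ j v‖ ≤ C * ((2:ℝ) ^ (j * N))⁻¹ * (‖v‖ ^ (d+1))⁻¹ := by
  obtain ⟨C, hC0, hC⟩ := scaled_bound d β₀ hβ N
  refine ⟨C * (1 + 2^N), by positivity, fun j v hv => ?_⟩
  have hvp : 0 < ‖v‖ := by linarith
  unfold KJ
  cases j with
  | zero =>
    rw [betaJ_zero, scaled_kernel]
    refine (hC 0 v hv).trans ?_
    gcongr
    have : (0:ℝ) ≤ 2^N := by positivity
    nlinarith
  | succ j =>
    rw [betaJ_cases, fourierInv_sub' (scaled_int d β₀ hβ _) (scaled_int d β₀ hβ _),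
      scaled_kernel, scaled_kernel]
    refine (norm_sub_le _ _).trans ((add_le_add (hC _ v hv) (hC _ v hv)).trans (le_of_eq ?_))
    have : (2:ℝ)^((j+1)*N) = 2^(j*N) * 2^N := by ring
    rw [this]
    field_simp

lemma KJ_cont (d : ℕ) (β₀ : ℝ → ℝ) (hβ : IsBump β₀) (j : ℕ) : Continuous (KJ d β₀ j) := by
  have h : Continuous (𝓕 (fun ξ : Euc d => (betaJ β₀ j ‖ξ‖ : ℂ))) :=
    VectorFourier.fourierIntegral_continuous Real.continuous_fourierChar
      (by exact continuous_inner) (betaJ_int d β₀ hβ j)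
  have : KJ d β₀ j = fun v => 𝓕 (fun ξ : Euc d => (betaJ β₀ j ‖ξ‖ : ℂ)) (-v) := by
    ext v; exact Real.fourierInv_eq_fourier_neg _ _
  rw [this]; exact h.comp continuous_neg

lemma KJ_bdd (d : ℕ) (β₀ : ℝ → ℝ) (j : ℕ) : ∃ B : ℝ, ∀ v, ‖KJ d β₀ j v‖ ≤ B := by
  refine ⟨∫ ξ : Euc d, ‖(betaJ β₀ j ‖ξ‖ : ℂ)‖, fun v => ?_⟩
  unfold KJ
  rw [Real.fourierInv_eq_fourier_neg]
  exact VectorFourier.norm_fourierIntegral_le_integral_norm _ _ _ _ _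

lemma freqLoc_eq (d : ℕ) (β₀ : ℝ → ℝ) (hβ : IsBump β₀) (j : ℕ) (f : Euc d → ℂ)
    (hf : Integrable f) (w : Euc d) :
    freqLoc d β₀ j f w = ∫ z, f z * KJ d β₀ j (w - z) := by
  unfold freqLoc
  rw [Real.fourierInv_eq]
  have hm := betaJ_int d β₀ hβ j
  have hg : Integrable (fun ξ : Euc d => Real.fourierChar (inner ℝ ξ w) • (betaJ β₀ j ‖ξ‖ : ℂ)) := by
    have := (Real.fourierIntegral_convergent_iff (f := fun ξ : Euc d => (betaJ β₀ j ‖ξ‖ : ℂ)) (-w)).2 hm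
    simpa using this
  have key := VectorFourier.integral_fourierIntegral_smul_eq_flip (L := innerₗ (Euc d))
    Real.continuous_fourierChar (by exact continuous_inner) hf hg
  have e1 : ∀ ξ : Euc d, Real.fourierChar (inner ℝ ξ w) • ((betaJ β₀ j ‖ξ‖ : ℂ) * 𝓕 f ξ)
     = VectorFourier.fourierIntegral Real.fourierChar volume (innerₗ (Euc d)) f ξ •
      (Real.fourierChar (inner ℝ ξ w) • (betaJ β₀ j ‖ξ‖ : ℂ)) := by
    intro ξ
    have : 𝓕 f ξ = VectorFourier.fourierIntegral Real.fourierChar volume (innerₗ (Euc d)) f ξ := rfl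
    rw [this]
    simp only [Circle.smul_def, smul_eq_mul]; ring
  simp_rw [e1]
  rw [key]
  congr 1; ext z
  rw [smul_eq_mul]; congr 1
  unfold KJ
  rw [Real.fourierInv_eq, VectorFourier.fourierIntegral]
  congr 1; ext ξ
  simp only [Circle.smul_def, smul_eq_mul, ← mul_assoc]
  congr 1
  rw [inner_sub_right, sub_eq_neg_add, AddChar.map_add_eq_mul]
  simp [real_inner_comm]

lemma conv_int (d : ℕ) (β₀ : ℝ → ℝ) (hβ : IsBump β₀) (j : ℕ) (f : Euc d → ℂ)
    (hf : Integrable f) (w : Euc d) : Integrable (fun z => f z * KJ d β₀ j (w - z)) := by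
  obtain ⟨B, hB⟩ := KJ_bdd d β₀ j
  have hc := KJ_cont d β₀ hβ j
  exact hf.mul_bdd (c := B) (by fun_prop) (.of_forall fun z => hB _)

lemma freqLoc_cont (d : ℕ) (β₀ : ℝ → ℝ) (hβ : IsBump β₀) (j : ℕ) (f : Euc d → ℂ)
    (hf : Integrable f) : Continuous (freqLoc d β₀ j f) := by
  obtain ⟨B, hB⟩ := KJ_bdd d β₀ j
  have hc := KJ_cont d β₀ hβ j
  have : freqLoc d β₀ j f = fun w => ∫ z, f z * KJ d β₀ j (w - z) :=
    funext (freqLoc_eq d β₀ hβ j f hf)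
  rw [this]
  refine continuous_of_dominated (bound := fun z => ‖f z‖ * B) ?_ ?_ ?_ ?_
  · intro w; exact (conv_int d β₀ hβ j f hf w).1
  · intro w; refine .of_forall fun z => ?_
    rw [norm_mul]; gcongr; exact hB _
  · exact hf.norm.mul_const _
  · exact .of_forall fun z => by fun_prop

lemma freqLoc_bdd (d : ℕ) (β₀ : ℝ → ℝ) (hβ : IsBump β₀) (j : ℕ) (f : Euc d → ℂ)
    (hf : Integrable f) : ∃ B, ∀ w, ‖freqLoc d β₀ j f w‖ ≤ B := by
  obtain ⟨B, hB⟩ := KJ_bdd d β₀ j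
  refine ⟨∫ z, ‖f z‖ * B, fun w => ?_⟩
  rw [freqLoc_eq d β₀ hβ j f hf]
  refine norm_integral_le_of_norm_le (hf.norm.mul_const _) (.of_forall fun z => ?_)
  rw [norm_mul]; gcongr; exact hB _

instance sphereMeasure_fin (d : ℕ) : IsFiniteMeasure (sphereMeasure d) := by
  refine ⟨lt_of_le_of_lt ?_ ENNReal.one_lt_top⟩
  unfold sphereMeasure
  rw [Measure.smul_apply, Measure.map_apply measurable_subtype_coe MeasurableSet.univ]
  simp [ENNReal.inv_mul_le_one]

lemma sphereMeasure_le (d : ℕ) : sphereMeasure d univ ≤ 1 := by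
  unfold sphereMeasure
  rw [Measure.smul_apply, Measure.map_apply measurable_subtype_coe MeasurableSet.univ]
  simp [ENNReal.inv_mul_le_one]

lemma sphereMeasure_ae (d : ℕ) : ∀ᵐ y ∂(sphereMeasure d), ‖y‖ = 1 := by
  unfold sphereMeasure
  refine Measure.ae_smul_measure ?_ _
  rw [ae_map_iff (by fun_prop) (measurableSet_eq_fun (by fun_prop) (by fun_prop))]
  refine .of_forall fun x => by simp

lemma Aj_add (d : ℕ) (χ β₀ : ℝ → ℝ) (hβ : IsBump β₀) (j : ℕ) (f g : Euc d → ℂ)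
    (hf : Integrable f) (hg : Integrable g) (x : Euc d) (t : ℝ) :
    Aj d χ β₀ j (f + g) x t = Aj d χ β₀ j f x t + Aj d χ β₀ j g x t := by
  have hi : ∀ f : Euc d → ℂ, Integrable f →
      Integrable (fun y => freqLoc d β₀ j f (x - t • y)) (sphereMeasure d) := by
    intro f hf
    obtain ⟨B, hB⟩ := freqLoc_bdd d β₀ hβ j f hf
    have := freqLoc_cont d β₀ hβ j f hf
    exact Integrable.of_bound (by fun_prop) B (.of_forall fun y => hB _)
  unfold Aj sphAvg
  rw [← mul_add, ← integral_add (hi f hf) (hi g hg)]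
  congr 2; ext y
  rw [freqLoc_eq d β₀ hβ j _ hf, freqLoc_eq d β₀ hβ j _ hg, freqLoc_eq d β₀ hβ j _ (hf.add hg),
    ← integral_add (conv_int d β₀ hβ j f hf _) (conv_int d β₀ hβ j g hg _)]
  simp [add_mul]

/-- weight -/
def wt (d : ℕ) (v : Euc d) : ℝ≥0∞ := ENNReal.ofReal ((1 + ‖v‖) ^ (-((d:ℝ)+1)))

lemma far_bound (d : ℕ) (χ β₀ : ℝ → ℝ) (hχ : IsCutoff χ) (hβ : IsBump β₀) (N : ℕ) :
    ∃ C : ℝ≥0, ∀ (j : ℕ) (f : Euc d → ℂ), Integrable f → ∀ (x : Euc d) (t : ℝ),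
      (∀ z, ‖x - z‖ < 8 → f z = 0) →
      ‖Aj d χ β₀ j f x t‖ₑ ≤ ‖χ t‖ₑ *
        (C * (2 : ℝ≥0∞) ^ (-((N : ℝ) * j)) * ∫⁻ z, ‖f z‖ₑ * wt d (x - z)) := by
  obtain ⟨C, hC0, hC⟩ := KJ_bound d β₀ hβ N
  refine ⟨(C * 4^(d+1)).toNNReal, fun j f hf x t hz => ?_⟩
  unfold Aj
  rw [enorm_mul]
  have : ‖(χ t : ℂ)‖ₑ = ‖χ t‖ₑ := by simp [enorm_eq_nnnorm]
  rw [this]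
  by_cases ht : χ t = 0
  · simp [ht]
  have ht2 : t ∈ Set.Icc (1/2:ℝ) 4 := hχ.2.2 ht
  gcongr
  unfold sphAvg
  set R := ((C * 4^(d+1)).toNNReal * (2 : ℝ≥0∞) ^ (-((N : ℝ) * j)) * ∫⁻ z, ‖f z‖ₑ * wt d (x - z)) with hR
  refine (enorm_integral_le_lintegral_enorm _).trans ?_
  have hb : ∀ᵐ y ∂(sphereMeasure d), ‖freqLoc d β₀ j f (x - t • y)‖ₑ ≤ R := by
    filter_upwards [sphereMeasure_ae d] with y hy
    rw [freqLoc_eq d β₀ hβ j f hf]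
    refine (enorm_integral_le_lintegral_enorm _).trans ?_
    rw [hR, ← lintegral_const_mul']
    · refine lintegral_mono fun z => ?_
      rw [enorm_mul]
      by_cases hz2 : ‖x - z‖ < 8
      · simp [hz z hz2]
      rw [mul_left_comm]
      gcongr
      push Not at hz2
      have h1 : ‖x - z‖ / 2 ≤ ‖x - t • y - z‖ := by
        have : ‖x - z‖ ≤ ‖x - t • y - z‖ + ‖t • y‖ := by
          refine le_trans (le_of_eq ?_) (norm_add_le _ _); congr 1; abel
        rw [norm_smul, hy, Real.norm_of_nonneg (by linarith [ht2.1])] at this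
        linarith [ht2.2]
      have h2 : (1 + ‖x - z‖) / 4 ≤ ‖x - t • y - z‖ := by linarith
      have h3 := hC j (x - t • y - z) (by linarith)
      have h4 : ‖KJ d β₀ j (x - t • y - z)‖ ≤
          C * 4 ^ (d+1) * ((2:ℝ) ^ (j * N))⁻¹ * ((1 + ‖x - z‖) ^ (d+1))⁻¹ := by
        refine h3.trans ?_
        calc C * ((2:ℝ) ^ (j * N))⁻¹ * (‖x - t • y - z‖ ^ (d+1))⁻¹
            ≤ C * ((2:ℝ) ^ (j * N))⁻¹ * (((1 + ‖x - z‖) / 4) ^ (d+1))⁻¹ := by gcongr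
          _ = _ := by rw [div_pow]; field_simp
      rw [← ofReal_norm]
      refine (ENNReal.ofReal_le_ofReal h4).trans (le_of_eq ?_)
      rw [ENNReal.ofReal_mul (by positivity), ENNReal.ofReal_mul (by positivity)]
      unfold wt
      congr 2
      · rw [ENNReal.rpow_neg, ENNReal.ofReal_inv_of_pos (by positivity)]
        congr 1
        rw [ENNReal.ofReal_pow (by norm_num), ENNReal.ofReal_ofNat, ← ENNReal.rpow_natCast]
        congr 1; push_cast; ring
      · rw [Real.rpow_neg (by positivity)]
        congr 1
        rw [← Real.rpow_natCast]; push_cast; rfl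
    · exact ENNReal.mul_ne_top ENNReal.coe_ne_top (by simp [ENNReal.rpow_eq_top_iff])
  refine (lintegral_mono_ae hb).trans ?_
  rw [lintegral_const]
  exact mul_le_of_le_one_right' (sphereMeasure_le d)
/-! Part 2 -/

section lq
variable {α : Type*} [MeasurableSpace α]

lemma lq_mono {q : ℝ≥0∞} {g h : α → ℝ≥0∞} {μ : Measure α} (H : ∀ᵐ x ∂μ, g x ≤ h x) :
    lqNorm q g μ ≤ lqNorm q h μ := by
  unfold lqNorm
  split_ifs
  · exact essSup_mono_ae H
  · refine ENNReal.rpow_le_rpow (lintegral_mono_ae ?_) (by positivity)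
    filter_upwards [H] with x hx
    exact ENNReal.rpow_le_rpow hx (by positivity)

lemma lq_mono_measure {q : ℝ≥0∞} {g : α → ℝ≥0∞} {μ ν : Measure α} (H : μ ≤ ν) :
    lqNorm q g μ ≤ lqNorm q g ν := by
  unfold lqNorm
  split_ifs
  · exact essSup_mono_measure (Measure.absolutelyContinuous_of_le H)
  · exact ENNReal.rpow_le_rpow (lintegral_mono' H le_rfl) (by positivity)

lemma lq_const_mul {q : ℝ≥0∞} (hq : 1 ≤ q) (c : ℝ≥0∞) (hc : c ≠ ∞) (g : α → ℝ≥0∞)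
    (μ : Measure α) : lqNorm q (fun x => c * g x) μ = c * lqNorm q g μ := by
  unfold lqNorm
  split_ifs with h
  · exact ENNReal.essSup_const_mul
  · have hq0 : 0 < q.toReal := ENNReal.toReal_pos (by positivity) h
    simp_rw [ENNReal.mul_rpow_of_nonneg _ _ hq0.le]
    rw [lintegral_const_mul' _ _ (by simp [ENNReal.rpow_eq_top_iff, hc, hq0.le]),
      ENNReal.mul_rpow_of_nonneg _ _ (by positivity), ← ENNReal.rpow_mul]
    simp [hq0.ne']

lemma eLp_eq_lq {E : Type*} [NormedAddCommGroup E] {q : ℝ≥0∞} (hq : 1 ≤ q) (f : α → E) (μ : Measure α) :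
    eLpNorm f q μ = lqNorm q (fun x => ‖f x‖ₑ) μ := by
  have : q ≠ 0 := by positivity
  simp [eLpNorm, lqNorm, this, eLpNorm', eLpNormEssSup]

lemma eLp_eq_lq' {q : ℝ≥0∞} (hq : 1 ≤ q) (f : α → ℝ≥0∞) (μ : Measure α) :
    eLpNorm f q μ = lqNorm q f μ := by
  have : q ≠ 0 := by positivity
  simp [eLpNorm, lqNorm, this, eLpNorm', eLpNormEssSup]

lemma lq_zero {q : ℝ≥0∞} (hq : 1 ≤ q) (μ : Measure α) :
    lqNorm q (fun _ : α => (0:ℝ≥0∞)) μ = 0 := by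
  have := lq_const_mul hq 0 (by simp) (fun _ : α => (0:ℝ≥0∞)) μ
  simpa using this

lemma lq_hold {q q' : ℝ≥0∞} (hq : 1 ≤ q) (hqq : q ≤ q') (g : α → ℝ≥0∞) (μ : Measure α) :
    lqNorm q g μ ≤ (1 + μ univ) * lqNorm q' g μ := by
  by_cases h : q = ∞
  · have : q' = ∞ := top_le_iff.1 (h ▸ hqq)
    rw [h, this]
    exact le_mul_of_one_le_left' le_self_add
  have hq0 : 0 < q.toReal := ENNReal.toReal_pos (by positivity) h
  obtain ⟨k, hkm, hk, hki⟩ := exists_measurable_le_lintegral_eq μ (fun x => g x ^ q.toReal)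
  have hle : ∀ x, k x ^ (1/q.toReal) ≤ g x := fun x => by
    calc k x ^ (1/q.toReal) ≤ (g x ^ q.toReal) ^ (1/q.toReal) :=
          ENNReal.rpow_le_rpow (hk x) (by positivity)
      _ = g x := by rw [← ENNReal.rpow_mul]; simp [hq0.ne']
  have h1 : lqNorm q g μ = lqNorm q (fun x => k x ^ (1/q.toReal)) μ := by
    simp only [lqNorm, h, if_false]
    rw [hki]
    congr 2; ext x; rw [← ENNReal.rpow_mul]; simp [hq0.ne']
  have h2 := eLpNorm_le_eLpNorm_mul_rpow_measure_univ (μ := μ) hqq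
    (f := (fun x => k x ^ (1/q.toReal))) (by
      exact (hkm.pow_const _).aestronglyMeasurable)
  rw [eLp_eq_lq' hq, eLp_eq_lq' (hq.trans hqq)] at h2
  rw [h1]
  refine h2.trans ?_
  rw [mul_comm]
  have hq1 : 1 ≤ q.toReal := by
    rw [← ENNReal.toReal_one]; exact ENNReal.toReal_mono h hq
  refine mul_le_mul' ?_ (lq_mono (.of_forall hle))
  have he0 : 0 ≤ 1 / q.toReal - 1 / q'.toReal := by
    by_cases h' : q' = ∞
    · simp [h']
    · rw [sub_nonneg]
      exact one_div_le_one_div_of_le hq0 (ENNReal.toReal_mono h' hqq)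
  have he1 : 1 / q.toReal - 1 / q'.toReal ≤ 1 := by
    have : 1 / q.toReal ≤ 1 := by rw [div_le_one hq0]; exact hq1
    have : 0 ≤ 1 / q'.toReal := by positivity
    linarith
  calc μ univ ^ (1 / q.toReal - 1 / q'.toReal) ≤ (1 + μ univ) ^ (1 / q.toReal - 1 / q'.toReal) :=
        ENNReal.rpow_le_rpow le_add_self he0
    _ ≤ (1 + μ univ) ^ (1:ℝ) := ENNReal.rpow_le_rpow_of_exponent_le le_self_add he1
    _ = _ := by simp

lemma lq_add {q : ℝ≥0∞} (hq : 1 ≤ q) (a b : α → ℝ≥0∞) (μ : Measure α) (hb : AEMeasurable b μ) :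
    lqNorm q (fun x => a x + b x) μ ≤ 2 * (lqNorm q a μ + lqNorm q b μ) := by
  unfold lqNorm
  split_ifs with h
  · exact (ENNReal.essSup_add_le a b).trans (le_mul_of_one_le_left' (by norm_num))
  have hq0 : 0 < q.toReal := ENNReal.toReal_pos (by positivity) h
  have hq1 : 1 ≤ q.toReal := by
    rw [← ENNReal.toReal_one]; exact ENNReal.toReal_mono h hq
  have h1 : 1 / q.toReal ≤ 1 := by rw [div_le_one hq0]; exact hq1
  set s := q.toReal
  calc (∫⁻ x, (a x + b x) ^ s ∂μ) ^ (1/s)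
      ≤ (∫⁻ x, (2:ℝ≥0∞)^(s-1) * (a x ^ s + b x ^ s) ∂μ) ^ (1/s) := by
        refine ENNReal.rpow_le_rpow (lintegral_mono fun x => ?_) (by positivity)
        exact ENNReal.rpow_add_le_mul_rpow_add_rpow _ _ hq1
    _ = ((2:ℝ≥0∞)^(s-1) * (∫⁻ x, a x ^ s ∂μ + ∫⁻ x, b x ^ s ∂μ)) ^ (1/s) := by
        rw [lintegral_const_mul' _ _ (by simp [ENNReal.rpow_eq_top_iff]),
          lintegral_add_right' _ (hb.pow_const _)]
    _ = (2:ℝ≥0∞)^((s-1)*(1/s)) * (∫⁻ x, a x ^ s ∂μ + ∫⁻ x, b x ^ s ∂μ) ^ (1/s) := by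
        rw [ENNReal.mul_rpow_of_nonneg _ _ (by positivity), ← ENNReal.rpow_mul]
    _ ≤ (2:ℝ≥0∞)^(1:ℝ) * ((∫⁻ x, a x ^ s ∂μ) ^ (1/s) + (∫⁻ x, b x ^ s ∂μ) ^ (1/s)) := by
        gcongr
        · norm_num
        · rw [mul_one_div, div_le_one hq0]; linarith
        · exact ENNReal.rpow_add_le_add_rpow _ _ (by positivity) h1
    _ = _ := by simp
end lq

lemma young (d : ℕ) (k : Euc d → ℝ≥0∞) (hk : Measurable k) (hk1 : ∀ v, k v ≤ 1)
    {p q : ℝ≥0∞} (hp : 1 ≤ p) (hpq : p ≤ q) (f : Euc d → ℂ) (hf : AEStronglyMeasurable f volume) :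
    (∀ x, lqNorm p (fun z => ‖f z‖ₑ) (volume.withDensity (fun z => k (x - z))) ≤
      lqNorm p (fun z => ‖f z‖ₑ) volume) ∧
    lqNorm q (fun x => lqNorm p (fun z => ‖f z‖ₑ) (volume.withDensity (fun z => k (x - z)))) volume
      ≤ (1 + ∫⁻ v, k v) * lqNorm p (fun z => ‖f z‖ₑ) volume := by
  set F := lqNorm p (fun z => ‖f z‖ₑ) volume with hF
  have h1 : ∀ x, lqNorm p (fun z => ‖f z‖ₑ) (volume.withDensity (fun z => k (x - z))) ≤ F := by
    intro x
    refine lq_mono_measure ?_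
    calc volume.withDensity (fun z => k (x - z)) ≤ volume.withDensity 1 :=
          withDensity_mono (.of_forall fun z => hk1 _)
      _ = volume := withDensity_one
  refine ⟨h1, ?_⟩
  by_cases hq : q = ∞
  · rw [lqNorm, if_pos hq]
    refine (essSup_le_of_ae_le F (.of_forall h1)).trans (le_mul_of_one_le_left' le_self_add)
  have hpt : p ≠ ∞ := fun h => hq (top_le_iff.1 (h ▸ hpq))
  have hp0 : 0 < p.toReal := ENNReal.toReal_pos (by positivity) hpt
  have hpq' : p.toReal ≤ q.toReal := ENNReal.toReal_mono hq hpq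
  have hp1 : 1 ≤ p.toReal := by
    rw [← ENNReal.toReal_one]; exact ENNReal.toReal_mono hpt hp
  have hfm : AEMeasurable (fun z => ‖f z‖ₑ ^ p.toReal) volume := hf.enorm.pow_const _
  have hgp : ∀ x, lqNorm p (fun z => ‖f z‖ₑ) (volume.withDensity (fun z => k (x - z))) ^ p.toReal
      = ∫⁻ z, k (x - z) * ‖f z‖ₑ ^ p.toReal := by
    intro x
    rw [lqNorm, if_neg hpt, ← ENNReal.rpow_mul]
    simp only [one_div, inv_mul_cancel₀ hp0.ne', ENNReal.rpow_one]
    rw [lintegral_withDensity_eq_lintegral_mul₀ (by fun_prop) hfm]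
    rfl
  have hFp : F ^ p.toReal = ∫⁻ z, ‖f z‖ₑ ^ p.toReal := by
    rw [hF, lqNorm, if_neg hpt, ← ENNReal.rpow_mul]
    simp only [one_div, inv_mul_cancel₀ hp0.ne', ENNReal.rpow_one]
  have hint : ∫⁻ x, ∫⁻ z, k (x - z) * ‖f z‖ₑ ^ p.toReal = (∫⁻ v, k v) * F ^ p.toReal := by
    rw [lintegral_lintegral_swap]
    · rw [hFp, mul_comm, ← lintegral_mul_const'' _ hfm]
      refine lintegral_congr fun z => ?_
      rw [lintegral_mul_const _ (by fun_prop), mul_comm]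
      congr 1
      exact lintegral_sub_right_eq_self k z
    · refine AEMeasurable.mul (Measurable.aemeasurable (by fun_prop)) ?_
      exact hfm.comp_snd
  rw [lqNorm, if_neg hq]
  set g := fun x => lqNorm p (fun z => ‖f z‖ₑ) (volume.withDensity (fun z => k (x - z)))
  have hb : ∫⁻ x, g x ^ q.toReal ≤ (∫⁻ v, k v) * F ^ q.toReal := by
    have hs : ∀ a : ℝ≥0∞, a ^ q.toReal = a ^ (q.toReal - p.toReal) * a ^ p.toReal := fun a => by
      rw [← ENNReal.rpow_add_of_nonneg _ _ (by linarith) hp0.le]; simp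
    have hmg : Measurable (fun x => ∫⁻ z, k (x - z) * (hfm.mk _) z) := by
      refine Measurable.lintegral_prod_right' (f := fun w : Euc d × Euc d => k (w.1 - w.2) * (hfm.mk _) w.2) ?_
      have := hfm.measurable_mk
      fun_prop
    calc ∫⁻ x, g x ^ q.toReal ≤ ∫⁻ x, F ^ (q.toReal - p.toReal) * ∫⁻ z, k (x - z) * ‖f z‖ₑ ^ p.toReal := by
          refine lintegral_mono fun x => ?_
          simp only []
          rw [hs, ← hgp]
          gcongr
          exact h1 x
      _ = F ^ (q.toReal - p.toReal) * ∫⁻ x, ∫⁻ z, k (x - z) * ‖f z‖ₑ ^ p.toReal := by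
          rw [lintegral_const_mul'']
          refine hmg.aemeasurable.congr (.of_forall fun x => ?_)
          refine lintegral_congr_ae ?_
          filter_upwards [hfm.ae_eq_mk] with z hz
          rw [hz]
      _ = _ := by rw [hint, hs F]; ring
  have hq0 : 0 < q.toReal := by linarith
  calc (∫⁻ x, g x ^ q.toReal) ^ (1/q.toReal) ≤ ((∫⁻ v, k v) * F ^ q.toReal) ^ (1/q.toReal) :=
        ENNReal.rpow_le_rpow hb (by positivity)
    _ = (∫⁻ v, k v) ^ (1/q.toReal) * F := by
        rw [ENNReal.mul_rpow_of_nonneg _ _ (by positivity), ← ENNReal.rpow_mul]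
        simp [hq0.ne']
    _ ≤ _ := by
        gcongr
        calc (∫⁻ v, k v) ^ (1/q.toReal) ≤ (1 + ∫⁻ v, k v) ^ (1/q.toReal) :=
              ENNReal.rpow_le_rpow le_add_self (by positivity)
          _ ≤ (1 + ∫⁻ v, k v) ^ (1:ℝ) := ENNReal.rpow_le_rpow_of_exponent_le le_self_add
              (by rw [div_le_one hq0]; linarith)
          _ = _ := by simp

lemma loc2glob (d : ℕ) {q : ℝ≥0∞} (hq : 1 ≤ q) (H b : Euc d → ℝ≥0∞)
    (h : ∀ y, lqNorm q H (volume.restrict (ball y 1)) ≤ b y) :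
    lqNorm q H volume ≤ (1 + (volume (ball (0 : Euc d) 1))⁻¹) * lqNorm q b volume := by
  by_cases hqt : q = ∞
  · subst hqt
    simp only [lqNorm, if_true] at h ⊢
    refine le_trans ?_ (le_mul_of_one_le_left' le_self_add)
    set B := essSup b volume
    have hd : Dense {y | b y ≤ B} := Measure.dense_of_ae (ENNReal.ae_le_essSup b)
    obtain ⟨T, hTs, hTc, hTd⟩ := hd.exists_countable_dense_subset
    have h2 : ∀ᵐ x, ∀ y ∈ T, x ∈ ball y 1 → H x ≤ B := by
      rw [ae_ball_iff hTc]
      intro y hy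
      rw [← ae_restrict_iff' measurableSet_ball]
      filter_upwards [ENNReal.ae_le_essSup H (μ := volume.restrict (ball y 1))] with x hx
      exact hx.trans ((h y).trans (hTs hy))
    refine essSup_le_of_ae_le B ?_
    filter_upwards [h2] with x hx
    obtain ⟨y, hy, hxy⟩ := hTd.exists_dist_lt x one_pos
    exact hx y hy hxy
  have hq0 : 0 < q.toReal := ENNReal.toReal_pos (by positivity) hqt
  have hq1 : 1 ≤ q.toReal := by
    rw [← ENNReal.toReal_one]; exact ENNReal.toReal_mono hqt hq
  simp only [lqNorm, hqt, if_false] at h ⊢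
  set V := volume (ball (0 : Euc d) 1) with hV
  have hV0 : V ≠ 0 := (Metric.measure_ball_pos _ _ one_pos).ne'
  have hVt : V ≠ ∞ := measure_ball_lt_top.ne
  obtain ⟨k, hkm, hk, hki⟩ := exists_measurable_le_lintegral_eq volume (fun x => H x ^ q.toReal)
  have h3 : V * ∫⁻ x, k x = ∫⁻ y, ∫⁻ x in ball y 1, k x := by
    have : ∀ y, ∫⁻ x in ball y 1, k x = ∫⁻ x, (ball (0 : Euc d) 1).indicator 1 (x - y) * k x := by
      intro y
      rw [← lintegral_indicator measurableSet_ball]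
      refine lintegral_congr fun x => ?_
      by_cases hx : x ∈ ball y 1
      · have : x - y ∈ ball (0 : Euc d) 1 := by simpa [dist_eq_norm] using hx
        simp [indicator_of_mem hx, indicator_of_mem this]
      · have : x - y ∉ ball (0 : Euc d) 1 := by simpa [dist_eq_norm] using hx
        simp [indicator_of_notMem hx, indicator_of_notMem this]
    simp_rw [this]
    have hm : Measurable ((ball (0 : Euc d) 1).indicator (1 : Euc d → ℝ≥0∞)) :=
      measurable_one.indicator measurableSet_ball
    rw [lintegral_lintegral_swap (Measurable.aemeasurable (by fun_prop)), ← lintegral_const_mul _ hkm]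
    refine lintegral_congr fun x => ?_
    rw [lintegral_mul_const _ (by fun_prop)]
    congr 1
    rw [lintegral_sub_left_eq_self, lintegral_indicator_one measurableSet_ball]
  have h4 : ∫⁻ x, k x ≤ V⁻¹ * ∫⁻ y, b y ^ q.toReal := by
    rw [← ENNReal.mul_le_iff_le_inv hV0 hVt, h3]
    refine lintegral_mono fun y => ?_
    have := ENNReal.rpow_le_rpow (h y) hq0.le
    rw [← ENNReal.rpow_mul] at this
    simp only [one_div, inv_mul_cancel₀ hq0.ne', ENNReal.rpow_one] at this
    exact (lintegral_mono hk).trans this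
  rw [hki]
  refine (ENNReal.rpow_le_rpow h4 (by positivity)).trans ?_
  rw [ENNReal.mul_rpow_of_nonneg _ _ (by positivity)]
  gcongr
  calc V⁻¹ ^ (1/q.toReal) ≤ (1 + V⁻¹) ^ (1/q.toReal) :=
        ENNReal.rpow_le_rpow le_add_self (by positivity)
    _ ≤ (1 + V⁻¹) ^ (1:ℝ) := ENNReal.rpow_le_rpow_of_exponent_le le_self_add
        (by rw [div_le_one hq0]; linarith)
    _ = _ := by simp
/-! Part 3 -/

lemma freqLoc_zero_of_fourier (d : ℕ) (χ β₀ : ℝ → ℝ) (j : ℕ) (f : Euc d → ℂ)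
    (h : ∀ ξ, 𝓕 f ξ = 0) (x : Euc d) (t : ℝ) : Aj d χ β₀ j f x t = 0 := by
  have : freqLoc d β₀ j f = fun _ => 0 := by
    ext w
    unfold freqLoc
    rw [Real.fourierInv_eq]
    simp [h]
  simp [Aj, sphAvg, this]

lemma mixed_zero (d : ℕ) {q r : ℝ≥0∞} (hq : 1 ≤ q) (hr : 1 ≤ r) (F : Euc d → ℝ → ℂ)
    (h : ∀ x t, F x t = 0) : mixedNorm d q r F = 0 := by
  unfold mixedNorm
  simp only [h, nnnorm_zero, ENNReal.coe_zero, lq_zero hr, lq_zero hq]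

lemma Aj_not_int (d : ℕ) (χ β₀ : ℝ → ℝ) (j : ℕ) (f : Euc d → ℂ)
    (h : ¬ Integrable f) (x : Euc d) (t : ℝ) : Aj d χ β₀ j f x t = 0 := by
  refine freqLoc_zero_of_fourier d χ β₀ j f (fun ξ => ?_) x t
  rw [Real.fourier_eq]
  exact integral_undef (fun h' => h ((Real.fourierIntegral_convergent_iff ξ).1 h'))

lemma Aj_smul (d : ℕ) (χ β₀ : ℝ → ℝ) (hβ : IsBump β₀) (j : ℕ) (f : Euc d → ℂ)
    (hf : Integrable f) (c : ℂ) (x : Euc d) (t : ℝ) :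
    Aj d χ β₀ j (c • f) x t = c * Aj d χ β₀ j f x t := by
  have h : ∀ w, freqLoc d β₀ j (c • f) w = c * freqLoc d β₀ j f w := by
    intro w
    rw [freqLoc_eq d β₀ hβ j f hf, freqLoc_eq d β₀ hβ j (c • f) (hf.smul c), ← integral_const_mul]
    simp [mul_assoc]
  unfold Aj sphAvg
  simp_rw [h]
  rw [integral_const_mul]; ring

lemma op_bound (d : ℕ) (χ β₀ : ℝ → ℝ) (hβ : IsBump β₀) (j : ℕ) {p q r : ℝ≥0∞}
    (hp : 1 ≤ p) (hq : 1 ≤ q) (hr : 1 ≤ r) (f : Euc d → ℂ) (hf : Integrable f)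
    (hfin : eLpNorm f p volume ≠ ∞) :
    mixedNorm d q r (Aj d χ β₀ j f) ≤ AjOpNorm d χ β₀ j p q r * eLpNorm f p volume := by
  by_cases h0 : eLpNorm f p volume = 0
  · have hz : f =ᵐ[volume] 0 := (eLpNorm_eq_zero_iff hf.1 (by positivity)).1 h0
    rw [mixed_zero d hq hr]
    · simp
    · refine freqLoc_zero_of_fourier d χ β₀ j f (fun ξ => ?_)
      rw [Real.fourier_congr_ae hz, Real.fourier_eq]; simp
  set c : ℝ := (eLpNorm f p volume).toReal with hc
  have hcpos : 0 < c := ENNReal.toReal_pos h0 hfin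
  have hce : ENNReal.ofReal c = eLpNorm f p volume := ENNReal.ofReal_toReal hfin
  set g : Euc d → ℂ := ((c⁻¹ : ℝ) : ℂ) • f with hg
  have hgi : Integrable g := hf.smul _
  have hfg : f = ((c : ℝ) : ℂ) • g := by
    rw [hg, smul_smul, ← Complex.ofReal_mul, mul_inv_cancel₀ hcpos.ne']; simp
  have hcn : ‖((c:ℝ) : ℂ)‖ₑ = eLpNorm f p volume := by
    rw [← ofReal_norm, Complex.norm_real, Real.norm_of_nonneg hcpos.le, hce]
  have hgn : eLpNorm g p volume ≤ 1 := by
    rw [hg, eLpNorm_const_smul, ← ofReal_norm, Complex.norm_real,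
      Real.norm_of_nonneg (by positivity), ENNReal.ofReal_inv_of_pos hcpos, hce]
    exact ENNReal.inv_mul_le_one _
  have h1 : mixedNorm d q r (Aj d χ β₀ j g) ≤ AjOpNorm d χ β₀ j p q r :=
    le_iSup₂_of_le (f := fun (f : Euc d → ℂ) (_ : eLpNorm f p volume ≤ 1) =>
      mixedNorm d q r (Aj d χ β₀ j f)) g hgn le_rfl
  have h2 : mixedNorm d q r (Aj d χ β₀ j f)
      = eLpNorm f p volume * mixedNorm d q r (Aj d χ β₀ j g) := by
    unfold mixedNorm
    rw [← lq_const_mul hq _ hfin]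
    congr 1; ext x
    rw [← lq_const_mul hr _ hfin]
    congr 1; ext t
    conv_lhs => rw [hfg, Aj_smul d χ β₀ hβ j g hgi]
    rw [← hcn, ← enorm_eq_nnnorm, ← enorm_eq_nnnorm, enorm_mul]
  rw [h2, mul_comm]
  gcongr

/-- weighted average -/
def WW (d : ℕ) (f : Euc d → ℂ) (x : Euc d) : ℝ≥0∞ := ∫⁻ z, ‖f z‖ₑ * wt d (x - z)

lemma wt_meas (d : ℕ) : Measurable (wt d) := by unfold wt; fun_prop

lemma wt_le (d : ℕ) (v : Euc d) : wt d v ≤ 1 := by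
  unfold wt
  rw [← ENNReal.ofReal_one]
  refine ENNReal.ofReal_le_ofReal ?_
  refine Real.rpow_le_one_of_one_le_of_nonpos (by linarith [norm_nonneg v]) ?_
  have : (0:ℝ) ≤ d := by positivity
  linarith

lemma wt_int (d : ℕ) : ∫⁻ v, wt d v ≠ ∞ := by
  refine (finite_integral_one_add_norm (μ := (volume : Measure (Euc d))) (r := (d:ℝ)+1) ?_).ne
  simp

lemma WW_ne_top (d : ℕ) (f : Euc d → ℂ) (hf : Integrable f) (x : Euc d) : WW d f x ≠ ∞ := by
  refine ne_top_of_le_ne_top hf.2.ne (lintegral_mono fun z => ?_)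
  exact mul_le_of_le_one_right' (wt_le d _)

lemma WW_aemeas (d : ℕ) (f : Euc d → ℂ) (hf : Integrable f) : AEMeasurable (WW d f) volume := by
  have hm := wt_meas d
  have hfm : AEMeasurable (fun z => ‖f z‖ₑ) volume := hf.1.enorm
  have hmg : Measurable (fun x => ∫⁻ z, (hfm.mk _) z * wt d (x - z)) := by
    refine Measurable.lintegral_prod_right' (f := fun w : Euc d × Euc d => (hfm.mk _) w.2 * wt d (w.1 - w.2)) ?_
    have := hfm.measurable_mk
    fun_prop
  refine hmg.aemeasurable.congr (.of_forall fun x => ?_)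
  refine lintegral_congr_ae ?_
  filter_upwards [hfm.ae_eq_mk] with z hz
  rw [hz]

lemma WW_bound (d : ℕ) {p q : ℝ≥0∞} (hp : 1 ≤ p) (hpq : p ≤ q) (f : Euc d → ℂ) (hf : Integrable f) :
    lqNorm q (WW d f) volume ≤ (1 + ∫⁻ v, wt d v) * ((1 + ∫⁻ v, wt d v) * eLpNorm f p volume) := by
  have hm := wt_meas d
  have h1 : ∀ x, WW d f x ≤ (1 + ∫⁻ v, wt d v) *
      lqNorm p (fun z => ‖f z‖ₑ) (volume.withDensity (fun z => wt d (x - z))) := by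
    intro x
    have h := lq_hold le_rfl hp (fun z => ‖f z‖ₑ) (volume.withDensity (fun z => wt d (x - z)))
    have e1 : lqNorm 1 (fun z => ‖f z‖ₑ) (volume.withDensity (fun z => wt d (x - z))) = WW d f x := by
      simp only [lqNorm, ENNReal.one_ne_top, if_false, ENNReal.toReal_one, ENNReal.rpow_one, div_one]
      rw [lintegral_withDensity_eq_lintegral_mul₀ (by fun_prop) hf.1.enorm]
      simp [WW, mul_comm]
    have e2 : (volume.withDensity (fun z => wt d (x - z))) univ = ∫⁻ v, wt d v := by
      rw [withDensity_apply _ MeasurableSet.univ, Measure.restrict_univ,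
        lintegral_sub_left_eq_self]
    rwa [e1, e2] at h
  refine (lq_mono (.of_forall h1)).trans ?_
  rw [lq_const_mul (hp.trans hpq) _ (by simp [wt_int d]), eLp_eq_lq hp]
  gcongr
  exact (young d (wt d) hm (wt_le d) hp hpq f hf.1).2

lemma indic_density (d : ℕ) (R : ℝ) (x : Euc d) :
    (volume : Measure (Euc d)).withDensity (fun z => (ball (0 : Euc d) R).indicator 1 (x - z))
      = volume.restrict (ball x R) := by
  rw [← withDensity_indicator_one measurableSet_ball]
  congr 1; ext z
  by_cases hx : z ∈ ball x R
  · have : x - z ∈ ball (0 : Euc d) R := by simpa [dist_eq_norm, norm_sub_rev] using hx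
    simp [indicator_of_mem hx, indicator_of_mem this]
  · have : x - z ∉ ball (0 : Euc d) R := by simpa [dist_eq_norm, norm_sub_rev] using hx
    simp [indicator_of_notMem hx, indicator_of_notMem this]

lemma part_one (d : ℕ) (χ β₀ : ℝ → ℝ) (hχ : IsCutoff χ) (hβ : IsBump β₀)
    (p₀ p₁ q₁ q₀ r : ℝ≥0∞) (hp₀ : 1 ≤ p₀) (hp : p₀ ≤ p₁) (hpq : p₁ ≤ q₁) (hq : q₁ ≤ q₀)
    (hr : 1 ≤ r) (N : ℕ) : ∃ C : ℝ≥0, ∀ j : ℕ,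
        AjOpNorm d χ β₀ j p₁ q₁ r ≤
          C * (AjOpNorm d χ β₀ j p₀ q₀ r + (2 : ℝ≥0∞) ^ (-((N : ℝ) * j))) := by
  obtain ⟨C₁, hC₁⟩ := far_bound d χ β₀ hχ hβ N
  have hp₁ : 1 ≤ p₁ := hp₀.trans hp
  have hq₁ : 1 ≤ q₁ := hp₁.trans hpq
  set V₁ := volume (ball (0 : Euc d) 1) with hV₁
  set V₉ := volume (ball (0 : Euc d) 9) with hV₉
  have hV₁0 : V₁ ≠ 0 := (Metric.measure_ball_pos _ _ one_pos).ne'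
  have hV₁t : V₁ ≠ ∞ := measure_ball_lt_top.ne
  have hV₉t : V₉ ≠ ∞ := measure_ball_lt_top.ne
  set I := ∫⁻ v, wt d v with hI
  have hIt : I ≠ ∞ := wt_int d
  set X := lqNorm r (fun t => ‖χ t‖ₑ) volume with hX
  have hcs : HasCompactSupport χ := by
    refine HasCompactSupport.intro (isCompact_Icc (a := (1/2:ℝ)) (b := 4)) fun t ht => ?_
    by_contra h
    exact ht (hχ.2.2 h)
  have hXt : X ≠ ∞ := by
    rw [hX, ← eLp_eq_lq hr]
    exact (hχ.1.continuous.memLp_of_hasCompactSupport hcs).2.ne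
  set K₁ := (1 + V₁⁻¹) * (2 * (1 + V₁) * (1 + V₉) * (1 + V₉)) with hK₁
  set K₂ := 2 * C₁ * X * ((1 + I) * (1 + I)) with hK₂
  set K := 2 * (K₁ + K₂) + 1 with hK
  have hKt : K ≠ ∞ := by
    simp only [hK, hK₁, hK₂]
    finiteness
  refine ⟨K.toNNReal, fun j => ?_⟩
  rw [ENNReal.coe_toNNReal hKt]
  set A := AjOpNorm d χ β₀ j p₀ q₀ r with hA
  set ε := (2 : ℝ≥0∞) ^ (-((N : ℝ) * j)) with hε
  have hεt : ε ≠ ∞ := by simp [hε, ENNReal.rpow_eq_top_iff]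
  by_cases hAt : A = ∞
  · rw [hAt, top_add, ENNReal.mul_top (by simp [hK])]
    exact le_top
  refine iSup₂_le fun f hf1 => ?_
  by_cases hf : Integrable f
  swap
  · rw [mixed_zero d hq₁ hr _ (Aj_not_int d χ β₀ j f hf)]; exact zero_le
  set G : Euc d → ℝ≥0∞ := fun x => lqNorm r (fun t => (‖Aj d χ β₀ j f x t‖₊ : ℝ≥0∞)) volume with hG
  set fy : Euc d → Euc d → ℂ := fun y => (ball y 9).indicator f with hfy
  set Gy : Euc d → Euc d → ℝ≥0∞ := fun y x =>
    lqNorm r (fun t => (‖Aj d χ β₀ j (fy y) x t‖₊ : ℝ≥0∞)) volume with hGy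
  have hfyi : ∀ y, Integrable (fy y) := fun y => hf.indicator measurableSet_ball
  set c₂ := 2 * C₁ * X * ε with hc₂
  have hc₂t : c₂ ≠ ∞ := by simp only [hc₂]; finiteness
  -- pointwise estimate
  have hpt : ∀ y, ∀ x ∈ ball y 1, G x ≤ 2 * Gy y x + c₂ * WW d f x := by
    intro y x hx
    set e := C₁ * ε * WW d f x with he
    have het : e ≠ ∞ := by
      have := WW_ne_top d f hf x
      simp only [he]; finiteness
    have h1 : ∀ t, (‖Aj d χ β₀ j f x t‖₊ : ℝ≥0∞) ≤ ‖Aj d χ β₀ j (fy y) x t‖₊ + e * ‖χ t‖ₑ := by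
      intro t
      have hci : Integrable ((ball y 9)ᶜ.indicator f) := hf.indicator measurableSet_ball.compl
      have hsum : f = fy y + (ball y 9)ᶜ.indicator f := by
        rw [hfy]; exact (indicator_self_add_compl _ _).symm
      have h2 : Aj d χ β₀ j f x t = Aj d χ β₀ j (fy y) x t
          + Aj d χ β₀ j ((ball y 9)ᶜ.indicator f) x t := by
        rw [← Aj_add d χ β₀ hβ j _ _ (hfyi y) hci, ← hsum]
      rw [h2, ← enorm_eq_nnnorm, ← enorm_eq_nnnorm]
      refine (enorm_add_le _ _).trans ?_
      gcongr
      refine (hC₁ j _ hci x t ?_).trans ?_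
      · intro z hz
        have : z ∈ ball y 9 := by
          rw [mem_ball] at hx ⊢
          rw [← dist_eq_norm] at hz
          calc dist z y ≤ dist x z + dist x y := dist_triangle_left z y x
            _ < 9 := by linarith
        simp [this]
      · rw [mul_comm, he]
        unfold WW
        gcongr with z
        exact enorm_indicator_le_enorm_self _ _
    have h3 := (lq_mono (q := r) (.of_forall h1)).trans (lq_add hr _ _ volume
      (Measurable.aemeasurable (by have := hχ.1.continuous; fun_prop)))
    rw [lq_const_mul hr _ het] at h3
    refine h3.trans (le_of_eq ?_)
    rw [mul_add, he, hc₂]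
    ring
  set H : Euc d → ℝ≥0∞ := fun x => G x - c₂ * WW d f x with hH
  set u : Euc d → ℝ≥0∞ := fun y => lqNorm p₁ (fun z => ‖f z‖ₑ)
    (volume.withDensity (fun z => (ball (0 : Euc d) 9).indicator 1 (y - z))) with hu
  have hmi : Measurable ((ball (0 : Euc d) 9).indicator (1 : Euc d → ℝ≥0∞)) :=
      measurable_one.indicator measurableSet_ball
  obtain ⟨hY1, hY2⟩ := young d ((ball (0 : Euc d) 9).indicator 1) hmi
    (fun v => indicator_le_self' (by simp) v) hp₁ hpq f hf.1
  rw [lintegral_indicator_one measurableSet_ball, ← hV₉] at hY2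
  rw [← eLp_eq_lq hp₁] at hY1 hY2
  have hloc : ∀ y, lqNorm q₁ H (volume.restrict (ball y 1)) ≤
      (2 * (1 + V₁) * (1 + V₉) * A) * u y := by
    intro y
    have hu1 : u y ≠ ∞ := ne_top_of_le_ne_top ENNReal.one_ne_top ((hY1 y).trans hf1)
    have hn : eLpNorm (fy y) p₀ volume ≤ (1 + V₉) * u y := by
      rw [hfy, eLpNorm_indicator_eq_eLpNorm_restrict measurableSet_ball, eLp_eq_lq hp₀]
      refine (lq_hold hp₀ hp _ _).trans ?_
      rw [hu]
      simp only []
      rw [indic_density, Measure.restrict_apply_univ, Measure.addHaar_ball_center]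
    have hnt : eLpNorm (fy y) p₀ volume ≠ ∞ := ne_top_of_le_ne_top (by finiteness) hn
    calc lqNorm q₁ H (volume.restrict (ball y 1))
        ≤ lqNorm q₁ (fun x => 2 * Gy y x) (volume.restrict (ball y 1)) := by
          refine lq_mono ?_
          filter_upwards [ae_restrict_mem measurableSet_ball] with x hx
          exact tsub_le_iff_right.2 (hpt y x hx)
      _ = 2 * lqNorm q₁ (Gy y) (volume.restrict (ball y 1)) := lq_const_mul hq₁ _ (by simp) _ _
      _ ≤ 2 * ((1 + V₁) * lqNorm q₀ (Gy y) (volume.restrict (ball y 1))) := by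
          gcongr
          refine (lq_hold hq₁ hq _ _).trans ?_
          rw [Measure.restrict_apply_univ, Measure.addHaar_ball_center]
      _ ≤ 2 * ((1 + V₁) * mixedNorm d q₀ r (Aj d χ β₀ j (fy y))) := by
          gcongr
          exact lq_mono_measure Measure.restrict_le_self
      _ ≤ 2 * ((1 + V₁) * (A * ((1 + V₉) * u y))) := by
          gcongr
          refine (op_bound d χ β₀ hβ j hp₀ (hq₁.trans hq) hr _ (hfyi y) hnt).trans ?_
          gcongr
      _ = _ := by ring
  have hHb : lqNorm q₁ H volume ≤ K₁ * A := by
    refine (loc2glob d hq₁ H _ hloc).trans ?_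
    rw [lq_const_mul hq₁ _ (by finiteness), hK₁]
    calc (1 + V₁⁻¹) * (2 * (1 + V₁) * (1 + V₉) * A * lqNorm q₁ u volume)
        ≤ (1 + V₁⁻¹) * (2 * (1 + V₁) * (1 + V₉) * A * ((1 + V₉) * 1)) := by
          gcongr
          exact hY2.trans (by gcongr)
      _ = _ := by ring
  have hW := WW_bound d hp₁ hpq f hf
  have hEb : lqNorm q₁ (fun x => c₂ * WW d f x) volume ≤ K₂ * ε := by
    rw [lq_const_mul hq₁ _ hc₂t, hK₂, hc₂]
    calc 2 * ↑C₁ * X * ε * lqNorm q₁ (WW d f) volume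
        ≤ 2 * ↑C₁ * X * ε * ((1 + I) * ((1 + I) * 1)) := by
          gcongr
          exact hW.trans (by gcongr)
      _ = _ := by ring
  calc mixedNorm d q₁ r (Aj d χ β₀ j f) = lqNorm q₁ G volume := rfl
    _ ≤ lqNorm q₁ (fun x => H x + c₂ * WW d f x) volume :=
        lq_mono (.of_forall fun x => le_tsub_add)
    _ ≤ 2 * (lqNorm q₁ H volume + lqNorm q₁ (fun x => c₂ * WW d f x) volume) :=
        lq_add hq₁ _ _ _ ((WW_aemeas d f hf).const_mul _)
    _ ≤ 2 * (K₁ * A + K₂ * ε) := by gcongr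
    _ ≤ 2 * ((K₁ + K₂) * A + (K₁ + K₂) * ε) := by
        gcongr
        · exact le_self_add
        · exact le_add_self
    _ = (2 * (K₁ + K₂)) * (A + ε) := by ring
    _ ≤ K * (A + ε) := by gcongr; exact le_self_add

lemma part_two (d : ℕ) (χ β₀ : ℝ → ℝ) (hχ : IsCutoff χ)
    (p q r₀ r₁ : ℝ≥0∞) (hr₀ : 1 ≤ r₀) (hr : r₀ ≤ r₁) (hp : 1 ≤ p) (hpq : p ≤ q) :
    ∃ C : ℝ≥0, ∀ j : ℕ,
        AjOpNorm d χ β₀ j p q r₀ ≤ C * AjOpNorm d χ β₀ j p q r₁ := by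
  set S := Set.Icc (1/2:ℝ) 4
  set V : ℝ≥0∞ := 1 + volume S with hV
  have hVt : V ≠ ∞ := by
    rw [hV]; exact ENNReal.add_ne_top.2 ⟨by simp, isCompact_Icc.measure_lt_top.ne⟩
  refine ⟨V.toNNReal, fun j => ?_⟩
  rw [ENNReal.coe_toNNReal hVt]
  refine iSup₂_le fun f hf => ?_
  have h1 : mixedNorm d q r₁ (Aj d χ β₀ j f) ≤ AjOpNorm d χ β₀ j p q r₁ :=
    le_iSup₂_of_le (f := fun (f : Euc d → ℂ) (_ : eLpNorm f p volume ≤ 1) =>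
      mixedNorm d q r₁ (Aj d χ β₀ j f)) f hf le_rfl
  refine le_trans ?_ (mul_le_mul_right h1 V)
  unfold mixedNorm
  rw [← lq_const_mul (hp.trans hpq) _ hVt]
  refine lq_mono (.of_forall fun x => ?_)
  set g : ℝ → ℝ≥0∞ := fun t => (‖Aj d χ β₀ j f x t‖₊ : ℝ≥0∞) with hg
  have hg0 : ∀ t, t ∉ S → g t = 0 := by
    intro t ht
    have : χ t = 0 := by
      by_contra h; exact ht (hχ.2.2 h)
    simp [hg, Aj, this]
  have h2 : lqNorm r₀ g volume ≤ lqNorm r₀ g (volume.restrict S) := by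
    unfold lqNorm
    split_ifs with h
    · refine essSup_le_of_ae_le _ ?_
      have := ENNReal.ae_le_essSup g (μ := volume.restrict S)
      rw [ae_restrict_iff' measurableSet_Icc] at this
      filter_upwards [this] with t ht
      by_cases hts : t ∈ S
      · exact ht hts
      · rw [hg0 t hts]; exact zero_le
    · have hr0 : 0 < r₀.toReal := ENNReal.toReal_pos (by positivity) h
      rw [setLIntegral_eq_of_support_subset]
      intro t ht
      by_contra hts
      exact ht (by simp [hg0 t hts, hr0])
  refine h2.trans ((lq_hold hr₀ hr g _).trans ?_)
  rw [Measure.restrict_apply_univ]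
  gcongr
  exact lq_mono_measure Measure.restrict_le_self

/-- Lemma 4.1 (localization): (i) for `p₀ ≤ p₁ ≤ q₁ ≤ q₀` and `1 ≤ r ≤ ∞`,
`‖𝒜_j‖_{L^{p₁} → L^{q₁}(L^r)} ≲ ‖𝒜_j‖_{L^{p₀} → L^{q₀}(L^r)} + C_N 2^{-jN}`;
(ii) for `r₀ ≤ r₁` and `1 ≤ p ≤ q ≤ ∞`,
`‖𝒜_j‖_{L^p → L^q(L^{r₀})} ≲ ‖𝒜_j‖_{L^p → L^q(L^{r₁})}`, uniformly in `j`. -/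
theorem localization_lemma (d : ℕ) (hd : 2 ≤ d) (χ β₀ : ℝ → ℝ)
    (hχ : IsCutoff χ) (hβ : IsBump β₀) :
    (∀ p₀ p₁ q₁ q₀ r : ℝ≥0∞, 1 ≤ p₀ → p₀ ≤ p₁ → p₁ ≤ q₁ → q₁ ≤ q₀ → 1 ≤ r →
      ∀ N : ℕ, ∃ C : ℝ≥0, ∀ j : ℕ,
        AjOpNorm d χ β₀ j p₁ q₁ r ≤
          C * (AjOpNorm d χ β₀ j p₀ q₀ r + (2 : ℝ≥0∞) ^ (-((N : ℝ) * j)))) ∧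
    (∀ p q r₀ r₁ : ℝ≥0∞, 1 ≤ r₀ → r₀ ≤ r₁ → 1 ≤ p → p ≤ q →
      ∃ C : ℝ≥0, ∀ j : ℕ,
        AjOpNorm d χ β₀ j p q r₀ ≤ C * AjOpNorm d χ β₀ j p q r₁) := by
  exact ⟨fun p₀ p₁ q₁ q₀ r h1 h2 h3 h4 h5 N =>
      part_one d χ β₀ hχ hβ p₀ p₁ q₁ q₀ r h1 h2 h3 h4 h5 N,
    fun p q r₀ r₁ h1 h2 h3 h4 => part_two d χ β₀ hχ p q r₀ r₁ h1 h2 h3 h4⟩
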